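/- Let g : ℝ → ℂ be 2π-periodic of class C⁵ and let ρ be a filter function. For a discrete function ψ define the commutator [H_h, g](ψ)_i = (H_h(g(α_·)ψ))_i − g(α_i)(H_h ψ)_i. Then there exists a constant c > 0, depending only on g and ρ and not on N or ψ, such that for every even integer N ≥ 2, every discrete function φ, and every k ∈ {0, 1, 2}: ‖D_h^k([H_h, g](φ^p))‖_{l²} ≤ c ‖φ‖_{l²} and ‖[H_h, g]((S_h^k φ)^p)‖_{l²} ≤ c ‖φ‖_{l²}. -/

import Mathlib

open scoped BigOperators
open Finset

noncomputable section

/-- Grid spacing `h = 2π/N`. -/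
def hgrid (N : ℤ) : ℝ := 2 * Real.pi / N

/-- Grid points `α_j = j h`. -/
def gridPt (N : ℤ) (j : ℤ) : ℝ := j * hgrid N

/-- Index set `{-N/2+1, …, N/2}`. -/
def idxs (N : ℤ) : Finset ℤ := Finset.Icc (-(N / 2) + 1) (N / 2)

/-- Discrete Fourier coefficient `f̂_k`. -/
def dft (N : ℤ) (f : ℤ → ℂ) (k : ℤ) : ℂ :=
  (N : ℂ)⁻¹ * ∑ j ∈ idxs N, f j * Complex.exp (-(Complex.I * (k : ℂ) * (gridPt N j : ℂ)))

/-- Reconstruction of a discrete function from Fourier coefficients. -/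
def idft (N : ℤ) (c : ℤ → ℂ) (j : ℤ) : ℂ :=
  ∑ k ∈ idxs N, c k * Complex.exp (Complex.I * (k : ℂ) * (gridPt N j : ℂ))

/-- The pseudo-spectral derivative `S_h`. -/
def Sh (N : ℤ) (f : ℤ → ℂ) : ℤ → ℂ :=
  idft N fun k => if k = N / 2 then 0 else Complex.I * (k : ℂ) * dft N f k

/-- The pseudo-spectral antiderivative `S_h⁻¹`. -/
def Shinv (N : ℤ) (f : ℤ → ℂ) : ℤ → ℂ :=
  idft N fun k => if k = 0 then 0 else dft N f k / (Complex.I * (k : ℂ))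

/-- The filtered discrete function `f^p`. -/
def filterP (N : ℤ) (ρ : ℝ → ℝ) (f : ℤ → ℂ) : ℤ → ℂ :=
  idft N fun k => (ρ (gridPt N k) : ℂ) * dft N f k

/-- The filtered derivative `D_h`. -/
def Dh (N : ℤ) (ρ : ℝ → ℝ) (f : ℤ → ℂ) : ℤ → ℂ :=
  idft N fun k => Complex.I * (k : ℂ) * (ρ (gridPt N k) : ℂ) * dft N f k

/-- Discrete `l²` norm. -/
def l2norm (N : ℤ) (f : ℤ → ℂ) : ℝ :=
  Real.sqrt (hgrid N * ∑ j ∈ idxs N, ‖f j‖ ^ 2)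

/-- Discrete Hilbert transform `H_h`. -/
def Hh (N : ℤ) (f : ℤ → ℂ) (i : ℤ) : ℂ :=
  ((hgrid N / Real.pi : ℝ) : ℂ) *
    ∑ j ∈ (idxs N).filter (fun j => Odd (j - i)),
      f j * (Real.cot ((gridPt N i - gridPt N j) / 2) : ℂ)

/-- Discrete inner product `(f,g)_h`. -/
def dip (N : ℤ) (f g : ℤ → ℂ) : ℂ :=
  (hgrid N : ℂ) * ∑ j ∈ idxs N, (starRingEnd ℂ) (f j) * g j

/-- Discrete mean `⟨f⟩_h`. -/
def dmean (N : ℤ) (f : ℤ → ℂ) : ℂ :=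
  (N : ℂ)⁻¹ * ∑ j ∈ idxs N, f j

/-- The discrete function of samples of a periodic function. -/
def samples (N : ℤ) (f : ℝ → ℂ) : ℤ → ℂ := fun j => f (gridPt N j)

/-- Fourier coefficient of a `2π`-periodic function. -/
def fourierCoeffP (f : ℝ → ℂ) (k : ℤ) : ℂ :=
  ((2 * Real.pi)⁻¹ : ℝ) * ∫ α in (-Real.pi)..Real.pi, f α * Complex.exp (-(Complex.I * (k : ℂ) * (α : ℂ)))

/-- Sobolev norm `‖f‖_s`. -/
def sobolevNorm (s : ℕ) (f : ℝ → ℂ) : ℝ :=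
  Real.sqrt (∑' k : ℤ, (1 + (k : ℝ) ^ 2) ^ s * ‖fourierCoeffP f k‖ ^ 2)

/-- A filter (cutoff) function for numerical filtering. -/
structure IsFilter (ρ : ℝ → ℝ) : Prop where
  even : ∀ x, ρ (-x) = ρ x
  nonneg : ∀ x, 0 ≤ ρ x
  smooth : ∃ r : ℕ, 2 < r ∧ ContDiff ℝ r ρ
  zero_at_pi : ρ Real.pi = 0
  zero_at_neg_pi : ρ (-Real.pi) = 0
  deriv_zero_at_pi : deriv ρ Real.pi = 0
  deriv_zero_at_neg_pi : deriv ρ (-Real.pi) = 0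
  one_near_zero : ∃ μ : ℝ, 0 < μ ∧ μ < 1 ∧ ∀ x : ℝ, |x| ≤ μ * Real.pi → ρ x = 1

/-- The commutator `[H_h, g](ψ)` of the discrete Hilbert transform with multiplication
by the samples of a smooth function `g`. -/
def commHh (N : ℤ) (g : ℝ → ℂ) (ψ : ℤ → ℂ) (i : ℤ) : ℂ :=
  Hh N (fun j => g (gridPt N j) * ψ j) i - g (gridPt N i) * Hh N ψ i

/-!
`H_h` is the Fourier multiplier whose `N`-periodic symbol is `-i sgn q` for `0 < |q| < N/2` and `0`
at `0` and `N/2`. Its commutator with `e^{inα}` therefore only sees frequencies `k` within distance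
`|n|` of a jump of the symbol, that is of `0` or `±N/2`. For these `|k| (π - |kh|) ≤ π |n|`, so if
`ρ(x) = O((π - |x|)^s)`, then each of up to `s` derivatives costs a factor `O(|n|)`. In the discrete
Fourier expansion of `g` the resulting `|n|^s` is absorbed by the coefficients: by Parseval's
identity for the `(s+1)`-st differences of the samples, they are square summable against
`|n|^(s+1)`, uniformly in `N`.
-/

open scoped Real ComplexConjugate fwdDiff

variable {N : ℤ}

/-! ### The grid and its characters -/

lemma hgrid_pos (hN : 0 < N) : 0 < hgrid N := by
  have : (0 : ℝ) < N := mod_cast hN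
  unfold hgrid
  positivity

lemma hgrid_div_pi (N : ℤ) : hgrid N / π = 2 / N := by
  rw [hgrid, div_right_comm, mul_div_cancel_right₀ _ Real.pi_ne_zero]

lemma hgrid_mul_half (hN : 0 < N) (hN2 : Even N) : hgrid N * (N / 2 : ℤ) = π := by
  have : (N : ℝ) ≠ 0 := mod_cast hN.ne'
  rw [hgrid, Int.cast_div_charZero hN2.two_dvd]
  push_cast
  field_simp

lemma gridPt_add (N i j : ℤ) : gridPt N (i + j) = gridPt N i + gridPt N j := by
  simp only [gridPt, Int.cast_add, add_mul]

lemma gridPt_one (N : ℤ) : gridPt N 1 = hgrid N := by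
  simp only [gridPt, Int.cast_one, one_mul]

lemma gridPt_neg (N j : ℤ) : gridPt N (-j) = -gridPt N j := by
  simp only [gridPt, Int.cast_neg, neg_mul]

lemma gridPt_self (hN : 0 < N) : gridPt N N = 2 * π :=
  mul_div_cancel₀ _ (mod_cast hN.ne')

lemma idxs_eq_Ioc (hN2 : Even N) : idxs N = Ioc (-(N / 2)) (-(N / 2) + N) := by
  obtain ⟨M, rfl⟩ := hN2
  ext j
  simp only [idxs, mem_Icc, mem_Ioc]
  omega

lemma card_idxs (hN : 0 < N) (hN2 : Even N) : ((idxs N).card : ℤ) = N := by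
  rw [idxs_eq_Ioc hN2, Int.card_Ioc, add_sub_cancel_left, Int.toNat_of_nonneg hN.le]

lemma abs_le_half_of_mem_idxs {k : ℤ} (hk : k ∈ idxs N) : |k| ≤ N / 2 := by
  rw [idxs, mem_Icc] at hk
  exact abs_le.2 ⟨by omega, hk.2⟩

lemma toIocMod_mem_idxs (hN : 0 < N) (hN2 : Even N) (q : ℤ) :
    toIocMod hN (-(N / 2)) q ∈ idxs N := by
  rw [idxs_eq_Ioc hN2, ← mem_coe, coe_Ioc]
  exact toIocMod_mem_Ioc hN _ q

lemma toIocMod_eq_self_of_mem_idxs (hN : 0 < N) (hN2 : Even N) {k : ℤ} (hk : k ∈ idxs N) :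
    toIocMod hN (-(N / 2)) k = k := by
  rwa [toIocMod_eq_self, ← coe_Ioc, mem_coe, ← idxs_eq_Ioc hN2]

lemma dvd_sub_toIocMod (hN : 0 < N) (a q : ℤ) : N ∣ q - toIocMod hN a q := by
  rw [self_sub_toIocMod, smul_eq_mul]
  exact dvd_mul_left _ _

lemma toIocMod_eq_toIocMod_of_dvd (hN : 0 < N) {a q r : ℤ} (h : N ∣ r - q) :
    toIocMod hN a q = toIocMod hN a r := by
  obtain ⟨t, ht⟩ := h
  exact (toIocMod_eq_toIocMod hN).2 ⟨t, by rw [ht, smul_eq_mul, mul_comm]⟩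

lemma eq_of_mem_idxs_of_dvd (hN : 0 < N) (hN2 : Even N) {k l : ℤ} (hk : k ∈ idxs N)
    (hl : l ∈ idxs N) (h : N ∣ k - l) : k = l := by
  rw [← toIocMod_eq_self_of_mem_idxs hN hN2 hk, ← toIocMod_eq_self_of_mem_idxs hN hN2 hl,
    toIocMod_eq_toIocMod_of_dvd hN h]

lemma apply_toIocMod_of_periodic {α : Type*} {F : ℤ → α} (hF : Function.Periodic F N)
    (hN : 0 < N) (a q : ℤ) : F (toIocMod hN a q) = F q :=
  hF.sub_zsmul_eq _

lemma sum_idxs_comp {M : Type*} [AddCommMonoid M] (hN : 0 < N) (hN2 : Even N) {F : ℤ → M}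
    (hF : Function.Periodic F N) {e : ℤ → ℤ} (he : ∀ j k, N ∣ e j - e k → N ∣ j - k) :
    ∑ j ∈ idxs N, F (e j) = ∑ j ∈ idxs N, F j := by
  have hinj : Set.InjOn (fun j => toIocMod hN (-(N / 2)) (e j)) (idxs N) := by
    intro j hj k hk hjk
    have hjk' : toIocMod hN (-(N / 2)) (e j) = toIocMod hN (-(N / 2)) (e k) := hjk
    refine eq_of_mem_idxs_of_dvd hN hN2 hj hk (he j k ?_)
    have := dvd_sub (dvd_sub_toIocMod hN (-(N / 2)) (e j)) (dvd_sub_toIocMod hN (-(N / 2)) (e k))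
    rwa [hjk', sub_sub_sub_cancel_right] at this
  have hmaps : Set.MapsTo (fun j => toIocMod hN (-(N / 2)) (e j)) (idxs N) (idxs N) :=
    fun j _ => toIocMod_mem_idxs hN hN2 (e j)
  exact sum_nbij _ hmaps hinj (surjOn_of_injOn_of_card_le _ hmaps hinj le_rfl)
    fun j _ => (apply_toIocMod_of_periodic hF hN _ (e j)).symm

lemma sum_idxs_add_right {M : Type*} [AddCommMonoid M] (hN : 0 < N) (hN2 : Even N) {F : ℤ → M}
    (hF : Function.Periodic F N) (i : ℤ) : ∑ j ∈ idxs N, F (j + i) = ∑ j ∈ idxs N, F j :=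
  sum_idxs_comp hN hN2 hF fun j k h => by rwa [add_sub_add_right_eq_sub] at h

lemma sum_idxs_neg {M : Type*} [AddCommMonoid M] (hN : 0 < N) (hN2 : Even N) {F : ℤ → M}
    (hF : Function.Periodic F N) : ∑ j ∈ idxs N, F (-j) = ∑ j ∈ idxs N, F j :=
  sum_idxs_comp hN hN2 hF fun j k h => by rwa [neg_sub_neg, dvd_sub_comm] at h

/-- The grid character `j ↦ e^{i q α_j}`. -/
def gridExp (N q j : ℤ) : ℂ := Complex.exp (Complex.I * q * gridPt N j)

lemma gridExp_comm (N q j : ℤ) : gridExp N q j = gridExp N j q := by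
  simp only [gridExp, gridPt, Complex.ofReal_mul, Complex.ofReal_intCast]
  ring_nf

lemma gridExp_add_left (N q r j : ℤ) :
    gridExp N (q + r) j = gridExp N q j * gridExp N r j := by
  simp only [gridExp, ← Complex.exp_add, Int.cast_add, mul_add, add_mul]

lemma gridExp_add_right (N q j i : ℤ) :
    gridExp N q (j + i) = gridExp N q j * gridExp N q i := by
  simp only [gridExp_comm N q, gridExp_add_left]

lemma gridExp_zero (N : ℤ) : gridExp N 0 = 1 := by
  ext j
  simp only [gridExp, Int.cast_zero, mul_zero, zero_mul, Complex.exp_zero, Pi.one_apply]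

lemma gridExp_neg_right (N q j : ℤ) : gridExp N q (-j) = gridExp N (-q) j := by
  simp only [gridExp, gridPt_neg, Int.cast_neg, Complex.ofReal_neg, mul_neg, neg_mul]

lemma conj_gridExp (N q j : ℤ) : conj (gridExp N q j) = gridExp N (-q) j := by
  simp only [gridExp, ← Complex.exp_conj, map_mul, Complex.conj_I, map_intCast,
    Complex.conj_ofReal, Int.cast_neg, neg_mul, mul_neg]

lemma norm_gridExp (N q j : ℤ) : ‖gridExp N q j‖ = 1 := by
  rw [gridExp, mul_assoc, ← Complex.ofReal_intCast, ← Complex.ofReal_mul,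
    Complex.norm_exp_I_mul_ofReal]

lemma gridExp_eq_zpow (N q j : ℤ) : gridExp N q j = gridExp N q 1 ^ j := by
  rw [gridExp, gridExp, ← Complex.exp_int_mul, gridPt_one, gridPt]
  push_cast
  ring_nf

lemma gridExp_half (hN : 0 < N) (hN2 : Even N) (j : ℤ) :
    gridExp N (N / 2) j = if Odd j then -1 else 1 := by
  have h1 : gridExp N (N / 2) 1 = -1 := by
    rw [← Complex.exp_pi_mul_I, gridExp, gridPt_one, ← hgrid_mul_half hN hN2]
    push_cast
    ring_nf
  rw [gridExp_eq_zpow, h1]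
  split_ifs with hj
  · exact hj.neg_one_zpow
  · exact (Int.not_odd_iff_even.1 hj).neg_one_zpow

lemma gridExp_eq_one_iff (hN : 0 < N) (q j : ℤ) : gridExp N q j = 1 ↔ N ∣ q * j := by
  have hN' : (N : ℂ) ≠ 0 := mod_cast hN.ne'
  have hpi : (π : ℂ) ≠ 0 := mod_cast Real.pi_ne_zero
  have key (n : ℤ) : Complex.I * q * gridPt N j = n * (2 * π * Complex.I) ↔ q * j = N * n := by
    rw [← Int.cast_inj (α := ℂ)]
    simp only [gridPt, hgrid]
    push_cast
    field_simp
  simp only [gridExp, Complex.exp_eq_one_iff, key]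
  rfl

lemma gridExp_periodic (hN : 0 < N) (q : ℤ) : Function.Periodic (gridExp N q) N := fun j => by
  rw [gridExp_add_right, (gridExp_eq_one_iff hN q N).2 (dvd_mul_left _ _), mul_one]

lemma gridExp_periodic_left (hN : 0 < N) (j : ℤ) : Function.Periodic (gridExp N · j) N :=
  fun q => by simpa only [gridExp_comm N _ j] using gridExp_periodic hN j q

lemma sum_gridExp (hN : 0 < N) (hN2 : Even N) (q : ℤ) :
    ∑ j ∈ idxs N, gridExp N q j = if N ∣ q then (N : ℂ) else 0 := by
  split_ifs with h
  · rw [sum_congr rfl fun j _ => (gridExp_eq_one_iff hN q j).2 (h.mul_right j), sum_const,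
      nsmul_eq_mul, mul_one]
    exact_mod_cast card_idxs hN hN2
  · have hne : gridExp N q 1 ≠ 1 := by rwa [Ne, gridExp_eq_one_iff hN, mul_one]
    have hshift := sum_idxs_add_right hN hN2 (gridExp_periodic hN q) 1
    simp only [gridExp_add_right, ← sum_mul] at hshift
    exact by_contra fun hS => hne (mul_left_cancel₀ hS (by rw [hshift, mul_one]))

lemma sum_gridExp_left (hN : 0 < N) (hN2 : Even N) (j : ℤ) :
    ∑ k ∈ idxs N, gridExp N k j = if N ∣ j then (N : ℂ) else 0 := by
  simp only [gridExp_comm N _ j, sum_gridExp hN hN2]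

lemma dft_eq_sum_gridExp (N : ℤ) (f : ℤ → ℂ) (k : ℤ) :
    dft N f k = (N : ℂ)⁻¹ * ∑ j ∈ idxs N, f j * gridExp N (-k) j := by
  simp only [dft, gridExp, Int.cast_neg, mul_neg, neg_mul]

lemma idft_eq_sum_gridExp (N : ℤ) (c : ℤ → ℂ) (j : ℤ) :
    idft N c j = ∑ k ∈ idxs N, c k * gridExp N k j := rfl

lemma dft_periodic (hN : 0 < N) (f : ℤ → ℂ) : Function.Periodic (dft N f) N := fun k => by
  simp only [dft_eq_sum_gridExp, ← gridExp_neg_right, (gridExp_periodic_left hN _ k :)]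

lemma dft_gridExp_mul (N n k : ℤ) (f : ℤ → ℂ) :
    dft N (gridExp N n * f) k = dft N f (k - n) := by
  have hexp (j : ℤ) : gridExp N (-(k - n)) j = gridExp N n j * gridExp N (-k) j := by
    rw [← gridExp_add_left, neg_sub, sub_eq_add_neg]
  simp only [dft_eq_sum_gridExp, hexp, Pi.mul_apply, mul_left_comm, mul_assoc]

lemma dft_idft (hN : 0 < N) (hN2 : Even N) (c : ℤ → ℂ) {k : ℤ} (hk : k ∈ idxs N) :
    dft N (idft N c) k = c k := by
  have hN' : (N : ℂ) ≠ 0 := mod_cast hN.ne'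
  simp only [dft_eq_sum_gridExp, idft_eq_sum_gridExp, sum_mul, mul_assoc, ← gridExp_add_left]
  rw [sum_comm]
  simp only [← mul_sum, sum_gridExp hN hN2, ← sub_eq_add_neg]
  rw [sum_eq_single_of_mem k hk fun l hl hlk => by
    rw [if_neg (mt (eq_of_mem_idxs_of_dvd hN hN2 hl hk) hlk), mul_zero], sub_self,
    if_pos (dvd_zero N), mul_comm, mul_inv_cancel_right₀ hN']

lemma idft_dft (hN : 0 < N) (hN2 : Even N) (f : ℤ → ℂ) (j : ℤ) :
    idft N (dft N f) j = f (toIocMod hN (-(N / 2)) j) := by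
  have hN' : (N : ℂ) ≠ 0 := mod_cast hN.ne'
  have hrep := toIocMod_mem_idxs hN hN2 j
  have hdvd : N ∣ -toIocMod hN (-(N / 2)) j + j := by
    rw [neg_add_eq_sub]
    exact dvd_sub_toIocMod hN _ j
  have hnot (i : ℤ) (hi : i ∈ idxs N) (hne : i ≠ toIocMod hN (-(N / 2)) j) : ¬N ∣ -i + j :=
    fun h => hne (eq_of_mem_idxs_of_dvd hN hN2 hi hrep <|
      by simpa only [add_sub_add_right_eq_sub, neg_sub_neg] using dvd_sub hdvd h)
  simp only [idft_eq_sum_gridExp, dft_eq_sum_gridExp, mul_assoc, sum_mul, ← mul_sum]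
  rw [sum_comm]
  simp only [← gridExp_neg_right, ← gridExp_add_right, ← mul_sum, sum_gridExp_left hN hN2]
  rw [sum_eq_single_of_mem _ hrep fun i hi hne => by rw [if_neg (hnot i hi hne), mul_zero],
    if_pos hdvd, mul_comm, mul_inv_cancel_right₀ hN']

lemma idft_dft_of_mem (hN : 0 < N) (hN2 : Even N) (f : ℤ → ℂ) {j : ℤ} (hj : j ∈ idxs N) :
    idft N (dft N f) j = f j := by
  rw [idft_dft hN hN2, toIocMod_eq_self_of_mem_idxs hN hN2 hj]

lemma idft_dft_of_periodic (hN : 0 < N) (hN2 : Even N) {f : ℤ → ℂ}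
    (hf : Function.Periodic f N) : idft N (dft N f) = f :=
  funext fun j => by rw [idft_dft hN hN2, apply_toIocMod_of_periodic hf]

lemma sum_idft_mul_conj (N : ℤ) (c f : ℤ → ℂ) :
    ∑ j ∈ idxs N, idft N c j * conj (f j) =
      ∑ k ∈ idxs N, c k * conj (∑ j ∈ idxs N, f j * gridExp N (-k) j) := by
  simp only [idft_eq_sum_gridExp, sum_mul, map_sum, map_mul, conj_gridExp, neg_neg, mul_sum]
  rw [sum_comm]
  refine sum_congr rfl fun k _ => sum_congr rfl fun j _ => ?_
  ring

lemma sum_norm_sq_idft (hN : 0 < N) (hN2 : Even N) (c : ℤ → ℂ) :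
    ∑ j ∈ idxs N, ‖idft N c j‖ ^ 2 = N * ∑ k ∈ idxs N, ‖c k‖ ^ 2 := by
  have hN' : (N : ℂ) ≠ 0 := mod_cast hN.ne'
  have hdft (k : ℤ) (hk : k ∈ idxs N) :
      ∑ j ∈ idxs N, idft N c j * gridExp N (-k) j = N * c k := by
    rw [← dft_idft hN hN2 c hk, dft_eq_sum_gridExp, mul_inv_cancel_left₀ hN']
  have h : ∑ j ∈ idxs N, idft N c j * conj (idft N c j) =
      N * ∑ k ∈ idxs N, c k * conj (c k) := by
    rw [sum_idft_mul_conj, mul_sum]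
    exact sum_congr rfl fun k hk => by rw [hdft k hk, map_mul, map_intCast, mul_left_comm]
  simp only [Complex.mul_conj'] at h
  exact_mod_cast h

lemma sum_norm_sq_dft (hN : 0 < N) (hN2 : Even N) (f : ℤ → ℂ) :
    N * ∑ k ∈ idxs N, ‖dft N f k‖ ^ 2 = ∑ j ∈ idxs N, ‖f j‖ ^ 2 := by
  rw [← sum_norm_sq_idft hN hN2]
  exact sum_congr rfl fun j hj => by rw [idft_dft_of_mem hN hN2 f hj]

/-! ### Fourier multipliers -/

lemma idft_mul_dft_eq_sum_mul_sub (hN : 0 < N) (hN2 : Even N) {K : ℤ → ℂ}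
    (hK : Function.Periodic K N) (f : ℤ → ℂ) (i : ℤ) :
    idft N (fun k => N * dft N K k * dft N f k) i = ∑ j ∈ idxs N, f j * K (i - j) := by
  have hN' : (N : ℂ) ≠ 0 := mod_cast hN.ne'
  have hexp (j : ℤ) : f j * K (i - j) =
      ∑ k ∈ idxs N, dft N K k * gridExp N k i * (f j * gridExp N (-k) j) := by
    nth_rw 1 [← idft_dft_of_periodic hN hN2 hK]
    simp only [idft_eq_sum_gridExp, mul_sum, sub_eq_add_neg, gridExp_add_right, gridExp_neg_right]
    exact sum_congr rfl fun k _ => by ring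
  simp only [hexp]
  rw [sum_comm, idft_eq_sum_gridExp]
  refine sum_congr rfl fun k _ => ?_
  rw [← mul_sum, dft_eq_sum_gridExp N f]
  field_simp

/-- The Fourier multiplier operator with symbol `m`: it multiplies the discrete Fourier coefficient
of index `k ∈ {-N/2+1, …, N/2}` by `m k`. Its values are `N`-periodic functions, so the symbol `1`
gives the identity only on periodic functions. -/
def fourierMultiplier (N : ℤ) (m : ℤ → ℂ) : Module.End ℂ (ℤ → ℂ) where
  toFun f := idft N fun k => m k * dft N f k
  map_add' f g := by
    ext j
    simp only [idft, dft, Pi.add_apply, add_mul, mul_add, sum_add_distrib]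
  map_smul' a f := by
    ext j
    simp only [idft, dft, Pi.smul_apply, smul_eq_mul, RingHom.id_apply, mul_assoc, ← mul_sum,
      mul_left_comm _ a]

lemma fourierMultiplier_apply (N : ℤ) (m f : ℤ → ℂ) :
    fourierMultiplier N m f = idft N fun k => m k * dft N f k := rfl

lemma fourierMultiplier_sub (N : ℤ) (m m' : ℤ → ℂ) :
    fourierMultiplier N (m - m') = fourierMultiplier N m - fourierMultiplier N m' := by
  ext f j
  simp only [fourierMultiplier_apply, LinearMap.sub_apply, Pi.sub_apply, idft, sub_mul,
    sum_sub_distrib]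

lemma fourierMultiplier_mul (hN : 0 < N) (hN2 : Even N) (m m' : ℤ → ℂ) :
    fourierMultiplier N (m * m') = fourierMultiplier N m * fourierMultiplier N m' := by
  ext f j
  simp only [Module.End.mul_apply, fourierMultiplier_apply, idft_eq_sum_gridExp N _ j]
  exact sum_congr rfl fun k hk => by rw [dft_idft hN hN2 _ hk, Pi.mul_apply, mul_assoc (m k)]

lemma fourierMultiplier_pow_mul (hN : 0 < N) (hN2 : Even N) (m m' : ℤ → ℂ) (p : ℕ) :
    fourierMultiplier N (m ^ p * m') = fourierMultiplier N m ^ p * fourierMultiplier N m' := by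
  induction p with
  | zero => rw [pow_zero, pow_zero, one_mul, one_mul]
  | succ p ih => rw [pow_succ', mul_assoc, fourierMultiplier_mul hN hN2, ih, pow_succ', mul_assoc]

lemma fourierMultiplier_mul_pow (hN : 0 < N) (hN2 : Even N) (m m' : ℤ → ℂ) (p : ℕ) :
    fourierMultiplier N (m' * m ^ p) = fourierMultiplier N m' * fourierMultiplier N m ^ p := by
  induction p with
  | zero => rw [pow_zero, pow_zero, mul_one, mul_one]
  | succ p ih => rw [pow_succ, ← mul_assoc, fourierMultiplier_mul hN hN2, ih, pow_succ, mul_assoc]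

lemma fourierMultiplier_gridExp_mul (hN : 0 < N) (hN2 : Even N) {m : ℤ → ℂ}
    (hm : Function.Periodic m N) (n : ℤ) (f : ℤ → ℂ) :
    fourierMultiplier N m (gridExp N n * f) =
      gridExp N n * fourierMultiplier N (fun k => m (k + n)) f := by
  ext j
  have hF : Function.Periodic (fun k => m k * dft N f (k - n) * gridExp N k j) N := fun k => by
    simp only [hm k, gridExp_periodic_left hN j k, add_sub_right_comm, dft_periodic hN f (k - n)]
  simp only [fourierMultiplier_apply, Pi.mul_apply, idft_eq_sum_gridExp, dft_gridExp_mul]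
  rw [← sum_idxs_add_right hN hN2 hF n, mul_sum]
  refine sum_congr rfl fun k _ => ?_
  rw [add_sub_cancel_right, gridExp_add_left]
  ring

lemma fourierMultiplier_commutator_gridExp (hN : 0 < N) (hN2 : Even N) {m : ℤ → ℂ}
    (hm : Function.Periodic m N) (n : ℤ) (f : ℤ → ℂ) :
    fourierMultiplier N m (gridExp N n * f) - gridExp N n * fourierMultiplier N m f =
      gridExp N n * fourierMultiplier N (fun k => m (k + n) - m k) f := by
  rw [fourierMultiplier_gridExp_mul hN hN2 hm, ← mul_sub, ← LinearMap.sub_apply,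
    ← fourierMultiplier_sub]
  rfl

lemma fourierMultiplier_commutator_gridExp_eq_apply_mul (hN : 0 < N) (hN2 : Even N) {m : ℤ → ℂ}
    (hm : Function.Periodic m N) (n : ℤ) (f : ℤ → ℂ) :
    fourierMultiplier N m (gridExp N n * f) - gridExp N n * fourierMultiplier N m f =
      fourierMultiplier N (fun k => m k - m (k - n)) (gridExp N n * f) := by
  have hm' : Function.Periodic (fun k => m k - m (k - n)) N := fun k => by
    simp only [hm k, add_sub_right_comm, hm (k - n)]
  rw [fourierMultiplier_commutator_gridExp hN hN2 hm, fourierMultiplier_gridExp_mul hN hN2 hm']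
  simp only [add_sub_cancel_right]

lemma filterP_eq_fourierMultiplier (N : ℤ) (ρ : ℝ → ℝ) :
    filterP N ρ = fourierMultiplier N fun k => ρ (gridPt N k) := rfl

lemma Dh_eq_fourierMultiplier (N : ℤ) (ρ : ℝ → ℝ) :
    Dh N ρ = fourierMultiplier N fun k => Complex.I * k * ρ (gridPt N k) := rfl

lemma Sh_eq_fourierMultiplier (N : ℤ) :
    Sh N = fourierMultiplier N fun k => if k = N / 2 then 0 else Complex.I * k := by
  simp only [fourierMultiplier, LinearMap.coe_mk, AddHom.coe_mk, ite_mul, zero_mul]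
  rfl

lemma l2norm_eq_norm_toLp (hN : 0 < N) (f : ℤ → ℂ) :
    l2norm N f = √(hgrid N) * ‖WithLp.toLp 2 fun j : idxs N => f j‖ := by
  rw [l2norm, Real.sqrt_mul (hgrid_pos hN).le, EuclideanSpace.norm_eq, ← sum_coe_sort]

lemma l2norm_sum_smul_le {ι : Type*} (hN : 0 < N) {t : Finset ι} {a : ι → ℂ} {F : ι → ℤ → ℂ}
    {B : ι → ℝ} (hF : ∀ n ∈ t, l2norm N (F n) ≤ B n) :
    l2norm N (∑ n ∈ t, a n • F n) ≤ ∑ n ∈ t, ‖a n‖ * B n := by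
  have hsum : WithLp.toLp 2 (fun j : idxs N => (∑ n ∈ t, a n • F n) j) =
      ∑ n ∈ t, a n • WithLp.toLp 2 fun j : idxs N => F n j := by
    ext j
    simp
  calc l2norm N (∑ n ∈ t, a n • F n)
      ≤ √(hgrid N) * ∑ n ∈ t, ‖a n • WithLp.toLp 2 fun j : idxs N => F n j‖ := by
        rw [l2norm_eq_norm_toLp hN, hsum]
        gcongr
        exact norm_sum_le _ _
    _ = ∑ n ∈ t, ‖a n‖ * l2norm N (F n) := by
        simp only [norm_smul, mul_sum, l2norm_eq_norm_toLp hN, mul_left_comm]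
    _ ≤ ∑ n ∈ t, ‖a n‖ * B n := by
        gcongr with n hn
        exact hF n hn

lemma l2norm_gridExp_mul (N n : ℤ) (f : ℤ → ℂ) : l2norm N (gridExp N n * f) = l2norm N f := by
  simp only [l2norm, Pi.mul_apply, norm_mul, norm_gridExp, one_mul]

lemma l2norm_fourierMultiplier_le (hN : 0 < N) (hN2 : Even N) {m : ℤ → ℂ} {B : ℝ}
    (hm : ∀ k ∈ idxs N, ‖m k‖ ≤ B) (f : ℤ → ℂ) :
    l2norm N (fourierMultiplier N m f) ≤ B * l2norm N f := by
  have hh := (hgrid_pos hN).le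
  have : (0 : ℝ) < N := mod_cast hN
  have hB : 0 ≤ B := (norm_nonneg _).trans (hm _ (toIocMod_mem_idxs hN hN2 0))
  have hsum : ∑ k ∈ idxs N, ‖m k * dft N f k‖ ^ 2 ≤ B ^ 2 * ∑ k ∈ idxs N, ‖dft N f k‖ ^ 2 := by
    rw [mul_sum]
    gcongr with k hk
    rw [norm_mul, mul_pow]
    gcongr
    exact hm k hk
  rw [l2norm, l2norm, fourierMultiplier_apply, sum_norm_sq_idft hN hN2, ← sum_norm_sq_dft hN hN2 f,
    ← Real.sqrt_sq hB, ← Real.sqrt_mul (sq_nonneg B)]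
  refine Real.sqrt_le_sqrt ?_
  calc hgrid N * (N * ∑ k ∈ idxs N, ‖m k * dft N f k‖ ^ 2)
      ≤ hgrid N * (N * (B ^ 2 * ∑ k ∈ idxs N, ‖dft N f k‖ ^ 2)) := by gcongr
    _ = B ^ 2 * (hgrid N * (N * ∑ k ∈ idxs N, ‖dft N f k‖ ^ 2)) := by ring

/-! ### The symbol of the discrete Hilbert transform -/

/-- The convolution kernel of the discrete Hilbert transform. -/
def hilbertKernel (N j : ℤ) : ℂ :=
  if Odd j then (hgrid N / π * Real.cot (gridPt N j / 2) : ℝ) else 0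

/-- The Fourier symbol of the discrete Hilbert transform, a discrete version of `-i sgn q`. -/
def hilbertSymbol (N q : ℤ) : ℂ := N * dft N (hilbertKernel N) q

lemma hilbertKernel_periodic (hN : 0 < N) (hN2 : Even N) :
    Function.Periodic (hilbertKernel N) N := fun j => by
  have hodd : Odd (j + N) ↔ Odd j := by simp only [Int.odd_add, hN2, iff_true]
  have hcot : Real.cot (gridPt N (j + N) / 2) = Real.cot (gridPt N j / 2) := by
    rw [gridPt_add, gridPt_self hN, add_div, mul_div_cancel_left₀ π two_ne_zero,
      Real.cot_eq_cos_div_sin, Real.cos_add_pi, Real.sin_add_pi, neg_div_neg_eq,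
      ← Real.cot_eq_cos_div_sin]
  simp only [hilbertKernel, hodd, hcot]

lemma hilbertKernel_neg (N j : ℤ) : hilbertKernel N (-j) = -hilbertKernel N j := by
  have hcot : Real.cot (-(gridPt N j) / 2) = -Real.cot (gridPt N j / 2) := by
    rw [neg_div, Real.cot_eq_cos_div_sin, Real.cos_neg, Real.sin_neg, div_neg,
      ← Real.cot_eq_cos_div_sin]
  simp only [hilbertKernel, odd_neg, gridPt_neg, hcot, mul_neg, Complex.ofReal_neg]
  split_ifs <;> simp

lemma Hh_eq_fourierMultiplier (hN : 0 < N) (hN2 : Even N) :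
    Hh N = fourierMultiplier N (hilbertSymbol N) := by
  ext f i
  refine .trans ?_ (idft_mul_dft_eq_sum_mul_sub hN hN2 (hilbertKernel_periodic hN hN2) f i).symm
  have hodd (j : ℤ) : Odd (i - j) ↔ Odd (j - i) := by rw [← odd_neg, neg_sub]
  have hpt (j : ℤ) : gridPt N (i - j) = gridPt N i - gridPt N j := by
    rw [sub_eq_add_neg, gridPt_add, gridPt_neg, sub_eq_add_neg]
  simp only [Hh, hilbertKernel, sum_filter, mul_sum, hodd, hpt, mul_ite, mul_zero,
    Complex.ofReal_mul, mul_left_comm]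

lemma hilbertSymbol_periodic (hN : 0 < N) : Function.Periodic (hilbertSymbol N) N := fun q => by
  rw [hilbertSymbol, dft_periodic hN, hilbertSymbol]

lemma hilbertSymbol_neg (hN : 0 < N) (hN2 : Even N) (q : ℤ) :
    hilbertSymbol N (-q) = -hilbertSymbol N q := by
  have hF : Function.Periodic (fun j => hilbertKernel N j * gridExp N (-q) j) N := fun j => by
    simp only [hilbertKernel_periodic hN hN2 j, gridExp_periodic hN (-q) j]
  simp only [hilbertSymbol, dft_eq_sum_gridExp]
  rw [← sum_idxs_neg hN hN2 hF]
  simp only [hilbertKernel_neg, gridExp_neg_right, neg_mul, sum_neg_distrib, mul_neg, neg_neg]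

lemma exp_neg_sub_one_mul_cot_half {θ : ℂ} (hθ : Complex.exp (Complex.I * θ) ≠ 1) :
    (Complex.exp (-(Complex.I * θ)) - 1) * Complex.cot (θ / 2) =
      -Complex.I * (1 + Complex.exp (-(Complex.I * θ))) := by
  have hexp : Complex.exp (2 * Complex.I * (θ / 2)) = Complex.exp (Complex.I * θ) := by
    congr 1; ring
  have h0 := Complex.exp_ne_zero (Complex.I * θ)
  have h1 : 1 - Complex.exp (Complex.I * θ) ≠ 0 := sub_ne_zero.2 hθ.symm
  rw [Complex.cot_eq_exp_ratio, hexp, Complex.exp_neg]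
  field_simp
  linear_combination (1 + Complex.exp (Complex.I * θ)) * Complex.I_sq

/- The factor `e^{-iα} - 1` cancels the pole of the cotangent, leaving a sum of characters: the
differences of the symbol, unlike the symbol itself, are geometric sums. -/
lemma gridExp_sub_one_mul_hilbertKernel (hN : 0 < N) (hN2 : Even N) (j : ℤ) :
    (gridExp N (-1) j - 1) * hilbertKernel N j =
      -(Complex.I / N) * ((1 + gridExp N (-1) j) * (1 - gridExp N (N / 2) j)) := by
  rw [gridExp_half hN hN2, hilbertKernel]
  split_ifs with hj
  · have hne : Complex.exp (Complex.I * gridPt N j) ≠ 1 := by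
      have h : gridExp N 1 j ≠ 1 := fun h => by
        rw [gridExp_eq_one_iff hN, one_mul] at h
        exact Int.not_even_iff_odd.2 hj (hN2.trans_dvd h)
      simpa only [gridExp, Int.cast_one, mul_one] using h
    have hexp : gridExp N (-1) j = Complex.exp (-(Complex.I * gridPt N j)) := by
      simp only [gridExp, Int.cast_neg, Int.cast_one, mul_neg, mul_one, neg_mul]
    rw [hexp, hgrid_div_pi]
    push_cast
    linear_combination 2 / N * exp_neg_sub_one_mul_cot_half hne
  · ring

lemma hilbertSymbol_add_one_sub (hN : 0 < N) (hN2 : Even N) (q : ℤ) :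
    hilbertSymbol N (q + 1) - hilbertSymbol N q =
      -Complex.I * ((if N ∣ q then 1 else 0) + (if N ∣ q + 1 then 1 else 0) -
        (if N ∣ q - N / 2 then 1 else 0) - (if N ∣ q + 1 - N / 2 then 1 else 0)) := by
  have hN' : (N : ℂ) ≠ 0 := mod_cast hN.ne'
  have hterm (j : ℤ) : hilbertKernel N j * gridExp N (-(q + 1)) j -
      hilbertKernel N j * gridExp N (-q) j =
      -(Complex.I / N) * (gridExp N (-q) j + gridExp N (-(q + 1)) j - gridExp N (-(q - N / 2)) j -
        gridExp N (-(q + 1 - N / 2)) j) := by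
    have h1 : -(q + 1) = -q + -1 := by ring
    have h2 : -(q - N / 2) = -q + N / 2 := by ring
    have h3 : -(q + 1 - N / 2) = -q + -1 + N / 2 := by ring
    simp only [h1, h2, h3, gridExp_add_left]
    linear_combination gridExp N (-q) j * gridExp_sub_one_mul_hilbertKernel hN hN2 j
  simp only [hilbertSymbol, dft_eq_sum_gridExp, mul_inv_cancel_left₀ hN', ← sum_sub_distrib, hterm]
  simp only [← mul_sum, sum_sub_distrib, sum_add_distrib, sum_gridExp hN hN2, dvd_neg]
  split_ifs <;> field_simp <;> ring

lemma hilbertSymbol_add_one (hN : 0 < N) (hN2 : Even N) {q : ℤ} (hq : ¬N / 2 ∣ q)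
    (hq' : ¬N / 2 ∣ q + 1) : hilbertSymbol N (q + 1) = hilbertSymbol N q := by
  have hdvd : N / 2 ∣ N := Int.ediv_dvd_of_dvd hN2.two_dvd
  rw [← sub_eq_zero, hilbertSymbol_add_one_sub hN hN2, if_neg (mt hdvd.trans hq),
    if_neg (mt hdvd.trans hq'), if_neg (mt hdvd.trans fun h => hq (by simpa using h)),
    if_neg (mt hdvd.trans fun h => hq' (by simpa using h))]
  ring

lemma hilbertSymbol_zero (hN : 0 < N) (hN2 : Even N) : hilbertSymbol N 0 = 0 :=
  self_eq_neg.1 (by simpa only [neg_zero] using hilbertSymbol_neg hN hN2 0)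

lemma hilbertSymbol_half (hN : 0 < N) (hN2 : Even N) : hilbertSymbol N (N / 2) = 0 := by
  have h : N / 2 = -(N / 2) + N := by
    obtain ⟨M, rfl⟩ := hN2
    omega
  refine self_eq_neg.1 ?_
  nth_rw 1 [h]
  rw [hilbertSymbol_periodic hN, hilbertSymbol_neg hN hN2]

lemma hilbertSymbol_of_pos_of_lt_half (hN : 0 < N) (hN2 : Even N) {q : ℤ} (hq : 0 < q)
    (hqN : q < N / 2) : hilbertSymbol N q = -Complex.I := by
  have hnot {r : ℤ} (h0 : 0 < r) (hr : r < N / 2) : ¬N / 2 ∣ r :=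
    fun h => (Int.le_of_dvd h0 h).not_gt hr
  induction q, Int.add_one_le_of_lt hq using Int.leInduction with
  | base =>
    have hone : ¬N ∣ 0 + 1 := fun h => by have := Int.le_of_dvd hq h; omega
    have hhalf : ¬N ∣ 0 - N / 2 := fun h => by
      have := Int.le_of_dvd (by omega) ((dvd_sub_comm).1 h)
      omega
    have hhalf' : ¬N ∣ 0 + 1 - N / 2 := fun h => by
      have := Int.le_of_dvd (by omega) ((dvd_sub_comm).1 h)
      omega
    have h := hilbertSymbol_add_one_sub hN hN2 0
    rw [if_pos (dvd_zero N), if_neg hone, if_neg hhalf, if_neg hhalf',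
      hilbertSymbol_zero hN hN2] at h
    linear_combination h
  | succ q h1 ih =>
    rw [hilbertSymbol_add_one hN hN2 (hnot (by omega) (by omega)) (hnot hq hqN),
      ih (by omega) (by omega)]

lemma norm_hilbertSymbol_le_one (hN : 0 < N) (hN2 : Even N) (q : ℤ) : ‖hilbertSymbol N q‖ ≤ 1 := by
  have hnonneg {r : ℤ} (h0 : 0 ≤ r) (hr : r ≤ N / 2) : ‖hilbertSymbol N r‖ ≤ 1 := by
    rcases h0.eq_or_lt with rfl | h0
    · rw [hilbertSymbol_zero hN hN2, norm_zero]
      exact zero_le_one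
    rcases hr.eq_or_lt with rfl | hr
    · rw [hilbertSymbol_half hN hN2, norm_zero]
      exact zero_le_one
    · rw [hilbertSymbol_of_pos_of_lt_half hN hN2 h0 hr, norm_neg, Complex.norm_I]
  rw [← apply_toIocMod_of_periodic (hilbertSymbol_periodic hN) hN (-(N / 2)) q]
  have habs := abs_le_half_of_mem_idxs (toIocMod_mem_idxs hN hN2 q)
  rcases abs_choice (toIocMod hN (-(N / 2)) q) with h | h
  · rw [← h]
    exact hnonneg (abs_nonneg _) habs
  · rw [← norm_neg, ← hilbertSymbol_neg hN hN2, ← h]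
    exact hnonneg (abs_nonneg _) habs

lemma eq_or_exists_dvd_mem_uIcc {α : Type*} {σ : ℤ → α} {M : ℤ}
    (hσ : ∀ q, ¬M ∣ q → ¬M ∣ q + 1 → σ (q + 1) = σ q) (k l : ℤ) :
    σ k = σ l ∨ ∃ q ∈ Set.uIcc k l, M ∣ q := by
  wlog hkl : k ≤ l generalizing k l
  · rw [Set.uIcc_comm, eq_comm]
    exact this l k (le_of_not_ge hkl)
  rw [Set.uIcc_of_le hkl, or_iff_not_imp_right]
  intro hM
  push Not at hM
  induction l, hkl using Int.leInduction with
  | base => rfl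
  | succ l hkl ih =>
    rw [hσ l (hM l ⟨hkl, by omega⟩) (hM (l + 1) ⟨by omega, le_rfl⟩)]
    exact ih fun q hq => hM q ⟨hq.1, by have := hq.2; omega⟩

/-! ### Commutator bounds at fixed `N` -/

lemma abs_mul_half_sub_abs_le {k q : ℤ} (hk : k ∈ idxs N)
    (hq : N / 2 ∣ q) : |k| * (N / 2 - |k|) ≤ N / 2 * |k - q| := by
  have hkM := abs_le_half_of_mem_idxs hk
  have hk0 := abs_nonneg k
  rcases eq_or_ne q 0 with rfl | hq0
  · rw [sub_zero]
    nlinarith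
  · have hqM : N / 2 ≤ |q| := Int.le_of_dvd (abs_pos.2 hq0) ((dvd_abs _ _).2 hq)
    have hsub : N / 2 - |k| ≤ |k - q| := by
      have := abs_sub_abs_le_abs_sub q k
      rw [abs_sub_comm] at this
      omega
    exact mul_le_mul hkM hsub (sub_nonneg.2 hkM) (hk0.trans hkM)

lemma pi_sub_abs_gridPt (hN : 0 < N) (hN2 : Even N) (k : ℤ) :
    π - |gridPt N k| = hgrid N * (N / 2 - |k| : ℤ) := by
  rw [gridPt, abs_mul, abs_of_pos (hgrid_pos hN), ← hgrid_mul_half hN hN2]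
  push_cast
  ring

lemma abs_gridPt_le_pi (hN : 0 < N) (hN2 : Even N) {k : ℤ} (hk : k ∈ idxs N) :
    |gridPt N k| ≤ π := by
  rw [← sub_nonneg, pi_sub_abs_gridPt hN hN2]
  exact mul_nonneg (hgrid_pos hN).le (mod_cast sub_nonneg.2 (abs_le_half_of_mem_idxs hk))

lemma hilbertSymbol_eq_or_abs_mul_pi_sub_le (hN : 0 < N) (hN2 : Even N) {k : ℤ} (hk : k ∈ idxs N)
    (l : ℤ) : hilbertSymbol N k = hilbertSymbol N l ∨
      |(k : ℝ)| * (π - |gridPt N k|) ≤ π * |(k - l : ℝ)| := by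
  refine (eq_or_exists_dvd_mem_uIcc (fun q => hilbertSymbol_add_one hN hN2) k l).imp_right ?_
  rintro ⟨q, hq, hqN⟩
  have hkq : |k - q| ≤ |k - l| := by
    rw [abs_sub_comm k q, abs_sub_comm k l]
    exact Set.abs_sub_left_of_mem_uIcc hq
  have hint : |k| * (N / 2 - |k|) ≤ N / 2 * |k - l| :=
    (abs_mul_half_sub_abs_le hk hqN).trans
      (mul_le_mul_of_nonneg_left hkq ((abs_nonneg k).trans (abs_le_half_of_mem_idxs hk)))
  calc |(k : ℝ)| * (π - |gridPt N k|) = hgrid N * (|k| * (N / 2 - |k|) : ℤ) := by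
        rw [pi_sub_abs_gridPt hN hN2, Int.cast_mul, Int.cast_abs]
        ring
    _ ≤ hgrid N * (N / 2 * |k - l| : ℤ) :=
        mul_le_mul_of_nonneg_left (mod_cast hint) (hgrid_pos hN).le
    _ = π * |(k - l : ℝ)| := by
        rw [Int.cast_mul, ← mul_assoc, hgrid_mul_half hN hN2]
        push_cast
        rfl

lemma norm_hilbertSymbol_sub_mul_le (hN : 0 < N) (hN2 : Even N) {k : ℤ} (hk : k ∈ idxs N) {l : ℤ}
    {w : ℂ} {B : ℝ} (hB : 0 ≤ B)
    (hw : |(k : ℝ)| * (π - |gridPt N k|) ≤ π * |(k - l : ℝ)| → ‖w‖ ≤ B) :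
    ‖(hilbertSymbol N k - hilbertSymbol N l) * w‖ ≤ 2 * B := by
  rcases hilbertSymbol_eq_or_abs_mul_pi_sub_le hN hN2 hk l with h | h
  · rw [h, sub_self, zero_mul, norm_zero]
    positivity
  · rw [norm_mul]
    have hσ := norm_sub_le_of_le (norm_hilbertSymbol_le_one hN hN2 k)
      (norm_hilbertSymbol_le_one hN hN2 l)
    rw [one_add_one_eq_two] at hσ
    exact mul_le_mul hσ (hw h) (norm_nonneg _) zero_le_two

lemma pow_mul_abs_le_of_abs_le_mul_pow {ρ : ℝ → ℝ} {C : ℝ} {s : ℕ} (hC : 0 ≤ C)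
    (hρ : ∀ x, |x| ≤ π → |ρ x| ≤ C * (π - |x|) ^ s) {x y n : ℝ} (hx : |x| ≤ π) (hy : 0 ≤ y)
    (hxy : y * (π - |x|) ≤ π * n) {p : ℕ} (hp : p ≤ s) :
    y ^ p * |ρ x| ≤ C * π ^ s * n ^ p := by
  have hx' : 0 ≤ π - |x| := sub_nonneg.2 hx
  have hn : 0 ≤ π * n := (mul_nonneg hy hx').trans hxy
  obtain ⟨r, rfl⟩ := Nat.exists_eq_add_of_le hp
  calc y ^ p * |ρ x| ≤ y ^ p * (C * (π - |x|) ^ (p + r)) := by gcongr; exact hρ x hx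
    _ = C * (y * (π - |x|)) ^ p * (π - |x|) ^ r := by rw [mul_pow, pow_add]; ring
    _ ≤ C * (π * n) ^ p * π ^ r := by
        gcongr
        exact sub_le_self _ (abs_nonneg x)
    _ = C * π ^ (p + r) * n ^ p := by ring

lemma samples_periodic (hN : 0 < N) {g : ℝ → ℂ} (hg : Function.Periodic g (2 * π)) :
    Function.Periodic (samples N g) N := fun j => by
  rw [samples, gridPt_add, gridPt_self hN, hg, samples]

lemma commHh_eq_sum (hN : 0 < N) (hN2 : Even N) {g : ℝ → ℂ} (hg : Function.Periodic g (2 * π))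
    (ψ : ℤ → ℂ) :
    commHh N g ψ = ∑ n ∈ (idxs N).erase 0, dft N (samples N g) n •
      (fourierMultiplier N (hilbertSymbol N) (gridExp N n * ψ) -
        gridExp N n * fourierMultiplier N (hilbertSymbol N) ψ) := by
  have hmul (f : ℤ → ℂ) :
      samples N g * f = ∑ n ∈ idxs N, dft N (samples N g) n • (gridExp N n * f) := by
    ext j
    rw [Pi.mul_apply, ← idft_dft_of_periodic hN hN2 (samples_periodic hN hg), idft_eq_sum_gridExp,
      idft_dft_of_periodic hN hN2 (samples_periodic hN hg), sum_mul, Finset.sum_apply]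
    simp only [Pi.smul_apply, Pi.mul_apply, smul_eq_mul, mul_assoc]
  have hcomm : commHh N g ψ = Hh N (samples N g * ψ) - samples N g * Hh N ψ := rfl
  rw [sum_erase _ (by simp only [gridExp_zero, one_mul, sub_self, smul_zero]), hcomm, hmul, hmul,
    Hh_eq_fourierMultiplier hN hN2]
  simp only [map_sum, map_smul, smul_sub, sum_sub_distrib]

lemma l2norm_Dh_iterate_commHh_le (hN : 0 < N) (hN2 : Even N) {g : ℝ → ℂ}
    (hg : Function.Periodic g (2 * π)) {ρ : ℝ → ℝ} {C : ℝ} {s : ℕ} (hC : 0 ≤ C)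
    (hρ : ∀ x, |x| ≤ π → |ρ x| ≤ C * (π - |x|) ^ s) {p : ℕ} (hp : p ≤ s) (φ : ℤ → ℂ) :
    l2norm N ((Dh N ρ)^[p] (commHh N g φ)) ≤
      ∑ n ∈ (idxs N).erase 0,
        ‖dft N (samples N g) n‖ * (2 * (C * π ^ s * |(n : ℝ)|) ^ p * l2norm N φ) := by
  rw [Dh_eq_fourierMultiplier, ← Module.End.pow_apply, commHh_eq_sum hN hN2 hg, map_sum]
  simp only [map_smul,
    fourierMultiplier_commutator_gridExp_eq_apply_mul hN hN2 (hilbertSymbol_periodic hN),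
    ← Module.End.mul_apply, ← fourierMultiplier_pow_mul hN hN2]
  refine l2norm_sum_smul_le hN fun n _ => ?_
  rw [← l2norm_gridExp_mul N n φ]
  refine l2norm_fourierMultiplier_le hN hN2 (fun k hk => ?_) _
  rw [Pi.mul_apply, Pi.pow_apply, mul_comm]
  refine norm_hilbertSymbol_sub_mul_le hN hN2 hk (by positivity) fun h => ?_
  rw [Int.cast_sub, sub_sub_cancel] at h
  rw [norm_pow, norm_mul, norm_mul, Complex.norm_I, one_mul, Complex.norm_real,
    Complex.norm_intCast, Real.norm_eq_abs]
  rcases p.eq_zero_or_pos with rfl | hp0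
  · rw [pow_zero, pow_zero]
  · refine pow_le_pow_left₀ (by positivity) ?_ p
    simpa only [pow_one] using pow_mul_abs_le_of_abs_le_mul_pow hC hρ (abs_gridPt_le_pi hN hN2 hk)
      (abs_nonneg (k : ℝ)) h (hp0.trans_le hp : 1 ≤ s)

lemma l2norm_commHh_filterP_Sh_iterate_le (hN : 0 < N) (hN2 : Even N) {g : ℝ → ℂ}
    (hg : Function.Periodic g (2 * π)) {ρ : ℝ → ℝ} {C : ℝ} {s : ℕ} (hC : 0 ≤ C)
    (hρ : ∀ x, |x| ≤ π → |ρ x| ≤ C * (π - |x|) ^ s) {p : ℕ} (hp : p ≤ s) (φ : ℤ → ℂ) :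
    l2norm N (commHh N g (filterP N ρ ((Sh N)^[p] φ))) ≤
      ∑ n ∈ (idxs N).erase 0,
        ‖dft N (samples N g) n‖ * (2 * (C * π ^ s * |(n : ℝ)| ^ p) * l2norm N φ) := by
  rw [Sh_eq_fourierMultiplier, ← Module.End.pow_apply, filterP_eq_fourierMultiplier,
    commHh_eq_sum hN hN2 hg]
  simp only [fourierMultiplier_commutator_gridExp hN hN2 (hilbertSymbol_periodic hN)]
  simp only [← Module.End.mul_apply, ← fourierMultiplier_mul hN hN2,
    ← fourierMultiplier_mul_pow hN hN2]
  refine l2norm_sum_smul_le hN fun n _ => ?_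
  rw [l2norm_gridExp_mul]
  refine l2norm_fourierMultiplier_le hN hN2 (fun k hk => ?_) _
  rw [Pi.mul_apply, Pi.mul_apply, Pi.pow_apply, norm_mul, norm_sub_rev, ← norm_mul]
  refine norm_hilbertSymbol_sub_mul_le hN hN2 hk (by positivity) fun h => ?_
  rw [Int.cast_add, sub_add_cancel_left, abs_neg] at h
  have hS : ‖if k = N / 2 then 0 else Complex.I * (k : ℂ)‖ ≤ |(k : ℝ)| := by
    split_ifs <;> simp
  calc ‖(ρ (gridPt N k) : ℂ) * (if k = N / 2 then 0 else Complex.I * (k : ℂ)) ^ p‖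
      ≤ |(k : ℝ)| ^ p * |ρ (gridPt N k)| := by
        rw [norm_mul, norm_pow, Complex.norm_real, Real.norm_eq_abs, mul_comm]
        gcongr
    _ ≤ C * π ^ s * |(n : ℝ)| ^ p :=
        pow_mul_abs_le_of_abs_le_mul_pow hC hρ (abs_gridPt_le_pi hN hN2 hk) (abs_nonneg _) h hp

/-! ### Decay of discrete Fourier coefficients -/

lemma norm_fwdDiff_iterate_le {E : Type*} [NormedAddCommGroup E] [NormedSpace ℝ E] (h : ℝ) {p : ℕ}
    {f : ℝ → E} {K : ℝ} (hf : ContDiff ℝ p f) (hK : ∀ x, ‖iteratedDeriv p f x‖ ≤ K) (x : ℝ) :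
    ‖Δ_[h] ^[p] f x‖ ≤ K * |h| ^ p := by
  induction p generalizing f K with
  | zero =>
    simpa only [Function.iterate_zero_apply, pow_zero, mul_one, iteratedDeriv_zero] using hK x
  | succ p ih =>
    have hfp : ContDiff ℝ p f := hf.of_le (mod_cast p.le_succ)
    have hshift : ContDiff ℝ p fun y => f (y + h) := hfp.comp (contDiff_id.add contDiff_const)
    rw [Function.iterate_succ_apply, pow_succ', ← mul_assoc]
    refine ih (hshift.sub hfp) fun y => ?_
    have hderiv : iteratedDeriv p (Δ_[h] f) y =
        iteratedDeriv p f (y + h) - iteratedDeriv p f y := by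
      rw [← congrFun (iteratedDeriv_comp_add_const p f h) y,
        ← iteratedDeriv_sub hshift.contDiffAt hfp.contDiffAt]
      rfl
    have hmvt := convex_univ.norm_image_sub_le_of_norm_deriv_le (𝕜 := ℝ)
      (f := iteratedDeriv p f) (C := K) (x := y) (y := y + h)
      (fun z _ => hf.differentiable_iteratedDeriv p (mod_cast p.lt_succ_self) z)
      (fun z _ => by rw [← iteratedDeriv_succ]; exact hK z) (Set.mem_univ _) (Set.mem_univ _)
    rw [add_sub_cancel_left] at hmvt
    rwa [hderiv, ← Real.norm_eq_abs]

lemma periodic_iteratedDeriv {E : Type*} [NormedAddCommGroup E] [NormedSpace ℝ E] {f : ℝ → E}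
    {c : ℝ} (hf : Function.Periodic f c) (p : ℕ) : Function.Periodic (iteratedDeriv p f) c :=
  fun x => by
    rw [← congrFun (iteratedDeriv_comp_add_const p f c) x, funext hf]

lemma exists_norm_iteratedDeriv_le_of_periodic {E : Type*} [NormedAddCommGroup E]
    [NormedSpace ℝ E] {f : ℝ → E} {c : ℝ} (hc : 0 < c) (hf : Function.Periodic f c) {p : ℕ}
    (hfp : ContDiff ℝ p f) : ∃ K, ∀ x, ‖iteratedDeriv p f x‖ ≤ K := by
  obtain ⟨K, hK⟩ := (isCompact_Icc (a := 0) (b := 0 + c)).exists_bound_of_continuousOn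
    (hfp.continuous_iteratedDeriv p le_rfl).continuousOn
  refine ⟨K, fun x => ?_⟩
  obtain ⟨y, hy, hxy⟩ := (periodic_iteratedDeriv hf p).exists_mem_Ico hc x 0
  exact hxy ▸ hK y (Set.Ico_subset_Icc_self hy)

lemma fwdDiff_iterate_samples (N : ℤ) (g : ℝ → ℂ) (p : ℕ) :
    Δ_[1] ^[p] (samples N g) = samples N (Δ_[hgrid N] ^[p] g) := by
  have h : Function.Semiconj (samples N) Δ_[hgrid N] Δ_[1] := fun f => by
    ext j
    simp only [samples, fwdDiff, gridPt_add, gridPt_one]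
  exact (h.iterate_right p g).symm

lemma dft_comp_add_right (hN : 0 < N) (hN2 : Even N) {f : ℤ → ℂ} (hf : Function.Periodic f N)
    (i m : ℤ) : dft N (fun j => f (j + i)) m = gridExp N m i * dft N f m := by
  have hinv : gridExp N (-m) i * gridExp N m i = 1 := by
    rw [← gridExp_add_left, neg_add_cancel, gridExp_zero, Pi.one_apply]
  have hshift := sum_idxs_add_right hN hN2 (hf.mul (gridExp_periodic hN (-m))) i
  simp only [Pi.mul_apply] at hshift
  rw [dft_eq_sum_gridExp, dft_eq_sum_gridExp, ← hshift, mul_left_comm]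
  congr 1
  rw [mul_sum]
  refine sum_congr rfl fun j _ => ?_
  rw [gridExp_add_right]
  linear_combination (-(f (j + i) * gridExp N (-m) j)) * hinv

lemma dft_fwdDiff_iterate (hN : 0 < N) (hN2 : Even N) {f : ℤ → ℂ} (hf : Function.Periodic f N)
    (p : ℕ) (m : ℤ) : dft N (Δ_[1] ^[p] f) m = (gridExp N m 1 - 1) ^ p * dft N f m := by
  induction p generalizing f with
  | zero => rw [Function.iterate_zero_apply, pow_zero, one_mul]
  | succ p ih =>
    have hper : Function.Periodic (Δ_[1] f) N := fun j => by
      simp only [fwdDiff, hf j, add_right_comm j N, hf (j + 1)]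
    have hone : dft N (Δ_[1] f) m = dft N (fun j => f (j + 1)) m - dft N f m := by
      simp only [dft, fwdDiff, sub_mul, sum_sub_distrib, mul_sub]
    rw [Function.iterate_succ_apply, ih hper, hone, dft_comp_add_right hN hN2 hf]
    ring

lemma hgrid_mul_abs_le_norm_gridExp_sub_one (hN : 0 < N) (hN2 : Even N) {m : ℤ}
    (hm : m ∈ idxs N) : hgrid N * |(m : ℝ)| ≤ π / 2 * ‖gridExp N m 1 - 1‖ := by
  have hexp : gridExp N m 1 = Complex.exp (Complex.I * gridPt N m) := by
    rw [gridExp_comm, gridExp, Int.cast_one, mul_one]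
  have hsin := Real.mul_abs_le_abs_sin (x := gridPt N m / 2) <| by
    rw [abs_div, abs_two]
    exact div_le_div_of_nonneg_right (abs_gridPt_le_pi hN hN2 hm) zero_le_two
  rw [abs_div, abs_two] at hsin
  rw [hexp, Complex.norm_exp_I_mul_ofReal_sub_one, norm_mul, Real.norm_two, Real.norm_eq_abs]
  calc hgrid N * |(m : ℝ)| = π * (2 / π * (|gridPt N m| / 2)) := by
        rw [gridPt, abs_mul, abs_of_pos (hgrid_pos hN)]
        field_simp
    _ ≤ π * |Real.sin (gridPt N m / 2)| := mul_le_mul_of_nonneg_left hsin Real.pi_pos.le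
    _ = π / 2 * (2 * |Real.sin (gridPt N m / 2)|) := by ring

lemma sum_norm_sq_dft_le (hN : 0 < N) (hN2 : Even N) {f : ℤ → ℂ} {K : ℝ} (hK : ∀ j, ‖f j‖ ≤ K) :
    ∑ k ∈ idxs N, ‖dft N f k‖ ^ 2 ≤ K ^ 2 := by
  have hN' : (0 : ℝ) < N := mod_cast hN
  refine le_of_mul_le_mul_left ?_ hN'
  have hcard : ((idxs N).card : ℝ) = N := mod_cast card_idxs hN hN2
  rw [sum_norm_sq_dft hN hN2, ← hcard, ← nsmul_eq_mul]
  exact sum_le_card_nsmul _ _ _ fun j _ => pow_le_pow_left₀ (norm_nonneg _) (hK j) 2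

lemma sum_norm_dft_mul_abs_pow_sq_le (hN : 0 < N) (hN2 : Even N) {f : ℤ → ℂ}
    (hf : Function.Periodic f N) {p : ℕ} {K : ℝ} (hK : ∀ j, ‖Δ_[1] ^[p] f j‖ ≤ K * hgrid N ^ p) :
    ∑ k ∈ idxs N, (‖dft N f k‖ * |(k : ℝ)| ^ p) ^ 2 ≤ ((π / 2) ^ p * K) ^ 2 := by
  have hh : 0 < hgrid N ^ p := pow_pos (hgrid_pos hN) p
  have hterm (k : ℤ) (hk : k ∈ idxs N) : hgrid N ^ p * (‖dft N f k‖ * |(k : ℝ)| ^ p) ≤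
      (π / 2) ^ p * ‖dft N (Δ_[1] ^[p] f) k‖ := by
    have := hgrid_pos hN
    calc hgrid N ^ p * (‖dft N f k‖ * |(k : ℝ)| ^ p)
        = (hgrid N * |(k : ℝ)|) ^ p * ‖dft N f k‖ := by ring
      _ ≤ (π / 2 * ‖gridExp N k 1 - 1‖) ^ p * ‖dft N f k‖ := by
          gcongr ?_ ^ p * _
          exact hgrid_mul_abs_le_norm_gridExp_sub_one hN hN2 hk
      _ = (π / 2) ^ p * ‖dft N (Δ_[1] ^[p] f) k‖ := by
          rw [dft_fwdDiff_iterate hN hN2 hf, norm_mul, norm_pow]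
          ring
  refine le_of_mul_le_mul_left ?_ (pow_pos hh 2)
  calc (hgrid N ^ p) ^ 2 * ∑ k ∈ idxs N, (‖dft N f k‖ * |(k : ℝ)| ^ p) ^ 2
      = ∑ k ∈ idxs N, (hgrid N ^ p * (‖dft N f k‖ * |(k : ℝ)| ^ p)) ^ 2 := by
        rw [mul_sum]
        exact sum_congr rfl fun k _ => (mul_pow _ _ 2).symm
    _ ≤ ∑ k ∈ idxs N, ((π / 2) ^ p * ‖dft N (Δ_[1] ^[p] f) k‖) ^ 2 :=
        sum_le_sum fun k hk => pow_le_pow_left₀ (by positivity) (hterm k hk) 2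
    _ = ((π / 2) ^ p) ^ 2 * ∑ k ∈ idxs N, ‖dft N (Δ_[1] ^[p] f) k‖ ^ 2 := by
        simp only [mul_pow, mul_sum]
    _ ≤ ((π / 2) ^ p) ^ 2 * (K * hgrid N ^ p) ^ 2 :=
        mul_le_mul_of_nonneg_left (sum_norm_sq_dft_le hN hN2 hK) (sq_nonneg _)
    _ = (hgrid N ^ p) ^ 2 * ((π / 2) ^ p * K) ^ 2 := by ring

lemma sum_mul_abs_pow_le_sqrt_mul_sqrt {t : Finset ℤ} (ht : 0 ∉ t) (a : ℤ → ℝ) (s : ℕ) :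
    ∑ n ∈ t, a n * |(n : ℝ)| ^ s ≤
      √(∑ n ∈ t, (a n * |(n : ℝ)| ^ (s + 1)) ^ 2) * √(∑' n : ℤ, 1 / (n : ℝ) ^ 2) := by
  have hsplit (n : ℤ) (hn : n ∈ t) :
      a n * |(n : ℝ)| ^ s = a n * |(n : ℝ)| ^ (s + 1) * |(n : ℝ)|⁻¹ := by
    have hn0 : |(n : ℝ)| ≠ 0 := abs_ne_zero.2 (mod_cast ne_of_mem_of_not_mem hn ht)
    rw [pow_succ, ← mul_assoc, mul_inv_cancel_right₀ hn0]
  rw [sum_congr rfl hsplit]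
  refine (Real.sum_mul_le_sqrt_mul_sqrt _ _ _).trans ?_
  gcongr
  simp only [inv_pow, sq_abs, inv_eq_one_div (_ ^ 2)]
  exact (Real.summable_one_div_int_pow.2 one_lt_two).sum_le_tsum t fun n _ => by positivity

lemma exists_sum_norm_dft_samples_mul_abs_pow_le {g : ℝ → ℂ} (hper : Function.Periodic g (2 * π))
    {s : ℕ} (hg : ContDiff ℝ (s + 1) g) : ∃ K, 0 ≤ K ∧ ∀ N : ℤ, 0 < N → Even N →
      ∑ n ∈ (idxs N).erase 0, ‖dft N (samples N g) n‖ * |(n : ℝ)| ^ s ≤ K := by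
  obtain ⟨K, hK⟩ := exists_norm_iteratedDeriv_le_of_periodic Real.two_pi_pos hper (p := s + 1)
    (mod_cast hg)
  have hK0 : 0 ≤ K := (norm_nonneg _).trans (hK 0)
  refine ⟨(π / 2) ^ (s + 1) * K * √(∑' n : ℤ, 1 / (n : ℝ) ^ 2), by positivity, fun N hN hN2 => ?_⟩
  have hdiff (j : ℤ) : ‖Δ_[1] ^[s + 1] (samples N g) j‖ ≤ K * hgrid N ^ (s + 1) := by
    rw [fwdDiff_iterate_samples]
    have := norm_fwdDiff_iterate_le (hgrid N) (p := s + 1) (mod_cast hg) hK (gridPt N j)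
    rwa [abs_of_pos (hgrid_pos hN)] at this
  refine (sum_mul_abs_pow_le_sqrt_mul_sqrt (notMem_erase 0 _) _ s).trans ?_
  gcongr
  refine Real.sqrt_le_iff.2 ⟨by positivity, ?_⟩
  exact (sum_le_sum_of_subset_of_nonneg (erase_subset _ _) fun _ _ _ => sq_nonneg _).trans
    (sum_norm_dft_mul_abs_pow_sq_le hN hN2 (samples_periodic hN hper) hdiff)

/-! ### Bounds uniform in `N` -/

lemma IsFilter.exists_abs_le_mul_sq {ρ : ℝ → ℝ} (hρ : IsFilter ρ) :
    ∃ C, ∀ x, |x| ≤ π → |ρ x| ≤ C * (π - |x|) ^ 2 := by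
  obtain ⟨r, hr, hsmooth⟩ := hρ.smooth
  have hlt : -π < π := neg_lt_self Real.pi_pos
  have hρ2 : ContDiff ℝ 2 ρ := hsmooth.of_le (mod_cast hr.le)
  obtain ⟨C, hC⟩ := exists_taylor_mean_remainder_bound (n := 1) hlt.le (f := ρ) hρ2.contDiffOn
  have htaylor (x : ℝ) : taylorWithinEval ρ 1 (Set.Icc (-π) π) (-π) x = 0 := by
    rw [taylorWithinEval_succ, taylor_within_zero_eval, zero_add, iteratedDerivWithin_one,
      (hρ2.differentiable two_ne_zero _).derivWithin
        (uniqueDiffOn_Icc hlt _ (Set.left_mem_Icc.2 hlt.le)),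
      hρ.zero_at_neg_pi, hρ.deriv_zero_at_neg_pi, smul_zero, add_zero]
  refine ⟨C, fun x hx => ?_⟩
  have heven : ρ (-|x|) = ρ x := by
    rw [hρ.even]
    rcases abs_choice x with h | h <;> rw [h]
    exact hρ.even x
  have hx' := hC (-|x|) ⟨neg_le_neg hx, (neg_nonpos.2 (abs_nonneg x)).trans Real.pi_pos.le⟩
  rwa [htaylor, sub_zero, heven, Real.norm_eq_abs, one_add_one_eq_two, sub_neg_eq_add,
    neg_add_eq_sub] at hx'

lemma sum_norm_mul_le_of_le_mul_abs_pow {t : Finset ℤ} {a : ℤ → ℂ} {w : ℤ → ℝ} {B K L : ℝ} {s : ℕ}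
    (hB : 0 ≤ B) (hL : 0 ≤ L) (hw : ∀ n ∈ t, w n ≤ B * |(n : ℝ)| ^ s)
    (hK : ∑ n ∈ t, ‖a n‖ * |(n : ℝ)| ^ s ≤ K) :
    ∑ n ∈ t, ‖a n‖ * (2 * w n * L) ≤ 2 * B * K * L :=
  calc ∑ n ∈ t, ‖a n‖ * (2 * w n * L)
      ≤ ∑ n ∈ t, ‖a n‖ * (2 * (B * |(n : ℝ)| ^ s) * L) := by
        gcongr with n hn
        exact hw n hn
    _ = 2 * B * (∑ n ∈ t, ‖a n‖ * |(n : ℝ)| ^ s) * L := by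
        rw [mul_sum, sum_mul]
        exact sum_congr rfl fun n _ => by ring
    _ ≤ 2 * B * K * L := by gcongr

lemma one_le_abs_of_mem_erase_zero {n : ℤ} {t : Finset ℤ} (hn : n ∈ t.erase 0) :
    1 ≤ |(n : ℝ)| :=
  mod_cast Int.one_le_abs (ne_of_mem_erase hn)

lemma exists_l2norm_Dh_iterate_commHh_le {g : ℝ → ℂ} (hper : Function.Periodic g (2 * π)) {s : ℕ}
    (hg : ContDiff ℝ (s + 1) g) {ρ : ℝ → ℝ} {C : ℝ} (hC : 0 ≤ C)
    (hρ : ∀ x, |x| ≤ π → |ρ x| ≤ C * (π - |x|) ^ s) :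
    ∃ c, 0 ≤ c ∧ ∀ N : ℤ, 0 < N → Even N → ∀ φ : ℤ → ℂ, ∀ p ≤ s,
      l2norm N ((Dh N ρ)^[p] (commHh N g φ)) ≤ c * l2norm N φ := by
  obtain ⟨K, hK, hsum⟩ := exists_sum_norm_dft_samples_mul_abs_pow_le hper hg
  set B := max 1 (C * π ^ s)
  refine ⟨2 * B ^ s * K, by positivity, fun N hN hN2 φ p hp => ?_⟩
  refine (l2norm_Dh_iterate_commHh_le hN hN2 hper hC hρ hp φ).trans
    (sum_norm_mul_le_of_le_mul_abs_pow (by positivity) (Real.sqrt_nonneg _) (fun n hn => ?_)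
      (hsum N hN hN2))
  have hn1 := one_le_abs_of_mem_erase_zero hn
  calc (C * π ^ s * |(n : ℝ)|) ^ p ≤ (B * |(n : ℝ)|) ^ p := by
        gcongr
        exact le_max_right _ _
    _ ≤ (B * |(n : ℝ)|) ^ s :=
        pow_le_pow_right₀ (one_le_mul_of_one_le_of_one_le (le_max_left _ _) hn1) hp
    _ = B ^ s * |(n : ℝ)| ^ s := mul_pow _ _ _

lemma exists_l2norm_commHh_filterP_Sh_iterate_le {g : ℝ → ℂ}
    (hper : Function.Periodic g (2 * π)) {s : ℕ} (hg : ContDiff ℝ (s + 1) g) {ρ : ℝ → ℝ} {C : ℝ}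
    (hC : 0 ≤ C) (hρ : ∀ x, |x| ≤ π → |ρ x| ≤ C * (π - |x|) ^ s) :
    ∃ c, 0 ≤ c ∧ ∀ N : ℤ, 0 < N → Even N → ∀ φ : ℤ → ℂ, ∀ p ≤ s,
      l2norm N (commHh N g (filterP N ρ ((Sh N)^[p] φ))) ≤ c * l2norm N φ := by
  obtain ⟨K, hK, hsum⟩ := exists_sum_norm_dft_samples_mul_abs_pow_le hper hg
  refine ⟨2 * (C * π ^ s) * K, by positivity, fun N hN hN2 φ p hp => ?_⟩
  refine (l2norm_commHh_filterP_Sh_iterate_le hN hN2 hper hC hρ hp φ).trans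
    (sum_norm_mul_le_of_le_mul_abs_pow (by positivity) (Real.sqrt_nonneg _) (fun n hn => ?_)
      (hsum N hN hN2))
  have hn1 := one_le_abs_of_mem_erase_zero hn
  gcongr

lemma l2norm_filterP_le (hN : 0 < N) (hN2 : Even N) {ρ : ℝ → ℝ} {B : ℝ}
    (hρ : ∀ x, |x| ≤ π → |ρ x| ≤ B) (φ : ℤ → ℂ) : l2norm N (filterP N ρ φ) ≤ B * l2norm N φ := by
  rw [filterP_eq_fourierMultiplier]
  refine l2norm_fourierMultiplier_le hN hN2 (fun k hk => ?_) φ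
  rw [Complex.norm_real, Real.norm_eq_abs]
  exact hρ _ (abs_gridPt_le_pi hN hN2 hk)

theorem hilbert_commutator_smoothing_general {g : ℝ → ℂ} (hper : Function.Periodic g (2 * π))
    {s : ℕ} (hg : ContDiff ℝ (s + 1) g) {ρ : ℝ → ℝ}
    (hρ : ∃ C, ∀ x, |x| ≤ π → |ρ x| ≤ C * (π - |x|) ^ s) :
    ∃ c, 0 < c ∧ ∀ N : ℤ, 0 < N → Even N → ∀ φ : ℤ → ℂ, ∀ k ≤ s,
      l2norm N ((Dh N ρ)^[k] (commHh N g (filterP N ρ φ))) ≤ c * l2norm N φ ∧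
      l2norm N (commHh N g (filterP N ρ ((Sh N)^[k] φ))) ≤ c * l2norm N φ := by
  obtain ⟨C, hρC⟩ := hρ
  have hC : 0 ≤ C := by
    have h0 := (abs_nonneg _).trans (hρC 0 (by rw [abs_zero]; positivity))
    rw [abs_zero, sub_zero] at h0
    exact nonneg_of_mul_nonneg_left h0 (by positivity)
  have hρ_le (x : ℝ) (hx : |x| ≤ π) : |ρ x| ≤ C * π ^ s := by
    have := sub_nonneg.2 hx
    refine (hρC x hx).trans ?_
    gcongr
    exact sub_le_self _ (abs_nonneg x)
  obtain ⟨c₁, hc₁, hD⟩ := exists_l2norm_Dh_iterate_commHh_le hper hg hC hρC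
  obtain ⟨c₂, hc₂, hS⟩ := exists_l2norm_commHh_filterP_Sh_iterate_le hper hg hC hρC
  refine ⟨c₁ * (C * π ^ s) + c₂ + 1, by positivity, fun N hN hN2 φ k hk => ?_⟩
  have hφ : 0 ≤ l2norm N φ := Real.sqrt_nonneg _
  constructor
  · calc l2norm N ((Dh N ρ)^[k] (commHh N g (filterP N ρ φ)))
        ≤ c₁ * (C * π ^ s * l2norm N φ) := by
          refine (hD N hN hN2 _ k hk).trans ?_
          gcongr
          exact l2norm_filterP_le hN hN2 hρ_le φ
      _ ≤ (c₁ * (C * π ^ s) + c₂ + 1) * l2norm N φ := by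
          rw [← mul_assoc, add_assoc]
          gcongr
          exact le_add_of_nonneg_right (by positivity)
  · refine (hS N hN hN2 φ k hk).trans ?_
    gcongr
    linarith [show 0 ≤ c₁ * (C * π ^ s) by positivity]

/-- Lemma 8.4: the commutator `[H_h, g]` applied to a filtered
function is a second-order smoothing operator `A_{-2}`. -/
theorem hilbert_commutator_smoothing (g : ℝ → ℂ)
    (hper : Function.Periodic g (2 * Real.pi)) (hg : ContDiff ℝ 5 g)
    (ρ : ℝ → ℝ) (hρ : IsFilter ρ) :
    ∃ c : ℝ, 0 < c ∧ ∀ N : ℤ, 2 ≤ N → Even N → ∀ φ : ℤ → ℂ, ∀ k : ℕ, k ≤ 2 →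
      l2norm N ((Dh N ρ)^[k] (commHh N g (filterP N ρ φ))) ≤ c * l2norm N φ ∧
      l2norm N (commHh N g (filterP N ρ ((Sh N)^[k] φ))) ≤ c * l2norm N φ := by
  obtain ⟨c, hc, hbound⟩ := hilbert_commutator_smoothing_general hper (s := 2)
    (hg.of_le (by norm_num)) hρ.exists_abs_le_mul_sq
  exact ⟨c, hc, fun N hN => hbound N (two_pos.trans_le hN)⟩

end
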